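/- arXiv:1701.03453 — 8 statements merged into one kernel-verified Lean document; each statement's English description precedes it below -/
import Mathlib

section
/- For any finite simple graph G = (V, E), the neighborhood polynomial satisfies N(G,x) = Σ_{v ∈ V} (1+x)^{deg v} − Σ_{W ⊆ V, |W| ≥ 2} (−1)^{|W|} (1+x)^{|⋂_{w ∈ W} N(w)|}. -/
/- The neighborhood complex of a graph `G`: the family of all subsets of open
neighborhoods of vertices of `G`. -/
open Classical in
noncomputable def nbhdComplex {V : Type*} [Fintype V] (G : SimpleGraph V) :
    Finset (Finset V) :=
  Finset.univ.filter fun X => ∃ v : V, ∀ u ∈ X, G.Adj v u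

/- The neighborhood polynomial of `G`, evaluated at `x`. -/
noncomputable def nbhdPoly {V : Type*} [Fintype V] (G : SimpleGraph V) (x : ℤ) : ℤ :=
  ∑ X ∈ nbhdComplex G, x ^ X.card

/-!
The neighborhood complex is the union of the power sets of the neighborhoods. Apply
inclusion–exclusion to this union: an intersection of power sets is the power set of the
intersection, and the subsets of a set `A`, with a subset `X` weighted by `∏ a ∈ X, f a`, have
total weight `∏ a ∈ A, (1 + f a)`.
-/

section

open Finset

variable {ι α : Type*}

lemma sum_powerset_filter_nonempty {M : Type*} [AddCommMonoid M] (s : Finset ι)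
    (f : Finset ι → M) :
    ∑ t ∈ s.powerset with t.Nonempty, f t =
      ∑ i ∈ s, f {i} + ∑ t ∈ s.powerset with 2 ≤ #t, f t := by
  have sum_card_one : ∑ t ∈ s.powerset with #t = 1, f t = ∑ i ∈ s, f {i} := by
    rw [← powersetCard_eq_filter, powersetCard_one, sum_map]
    rfl
  rw [← sum_filter_add_sum_filter_not _ (fun t : Finset ι ↦ #t = 1), filter_filter,
    filter_filter, ← sum_card_one]
  congr 2 <;> ext t <;> simp only [mem_filter, ← card_pos] <;> lia

variable [DecidableEq α] [Fintype α]

lemma sum_biUnion_eq_sum_sub_sum_inf {A : Type*} [AddCommGroup A] (s : Finset ι)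
    (S : ι → Finset α) (f : α → A) :
    ∑ a ∈ s.biUnion S, f a =
      ∑ i ∈ s, ∑ a ∈ S i, f a -
        ∑ t ∈ s.powerset with 2 ≤ #t, (-1 : ℤ) ^ #t • ∑ a ∈ t.inf S, f a := by
  calc ∑ a ∈ s.biUnion S, f a
      = ∑ t ∈ s.powerset with t.Nonempty, (-1 : ℤ) ^ (#t + 1) • ∑ a ∈ t.inf S, f a := by
        rw [inclusion_exclusion_sum_biUnion, ← sum_coe_sort (s.powerset.filter (·.Nonempty))]
        simp only [inf'_eq_inf]
    _ = ∑ i ∈ s, ∑ a ∈ S i, f a -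
        ∑ t ∈ s.powerset with 2 ≤ #t, (-1 : ℤ) ^ #t • ∑ a ∈ t.inf S, f a := by
        rw [sum_powerset_filter_nonempty, sub_eq_add_neg, ← sum_neg_distrib]
        simp [pow_succ]

lemma inf_powerset (t : Finset ι) (N : ι → Finset α) :
    (t.inf fun i ↦ (N i).powerset) = (t.inf N).powerset := by
  ext X
  simp only [mem_inf, mem_powerset]
  exact Finset.le_inf_iff.symm

theorem neighborhood_poly_inclusion_exclusion_general {R : Type*} [CommRing R] (s : Finset ι)
    (N : ι → Finset α) (f : α → R) :
    ∑ X ∈ s.biUnion fun i ↦ (N i).powerset, ∏ a ∈ X, f a =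
      ∑ i ∈ s, ∏ a ∈ N i, (1 + f a) -
        ∑ t ∈ s.powerset with 2 ≤ #t, (-1) ^ #t * ∏ a ∈ t.inf N, (1 + f a) := by
  simp only [sum_biUnion_eq_sum_sub_sum_inf, inf_powerset, ← prod_one_add, zsmul_eq_mul,
    Int.cast_pow, Int.cast_neg, Int.cast_one]

lemma nbhdComplex_eq_biUnion_powerset {V : Type*} [Fintype V] [DecidableEq V]
    (G : SimpleGraph V) [DecidableRel G.Adj] :
    nbhdComplex G = univ.biUnion fun v ↦ (G.neighborFinset v).powerset := by
  ext X
  simp [nbhdComplex, subset_iff]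

end

open Classical in
theorem neighborhood_poly_inclusion_exclusion {V : Type*} [Fintype V]
    (G : SimpleGraph V) [DecidableRel G.Adj] (x : ℤ) :
    nbhdPoly G x =
      (∑ v : V, (1 + x) ^ G.degree v) -
        ∑ W ∈ Finset.univ.filter (fun W : Finset V => 2 ≤ W.card),
          (-1 : ℤ) ^ W.card * (1 + x) ^ (W.inf fun w => G.neighborFinset w).card := by
  simpa [nbhdPoly, nbhdComplex_eq_biUnion_powerset] using
    neighborhood_poly_inclusion_exclusion_general Finset.univ (fun v ↦ G.neighborFinset v)
      fun _ ↦ x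
end

section
/- Let G = (V, E) be a finite simple graph with E ≠ ∅ that is not the disjoint union of a complete bipartite graph and an edgeless graph. Then Σ_{F ⊆ E} (−1)^{|F|} N(G − F, x) = 0, where G − F denotes the spanning subgraph (V, E \ F). -/
lemma sum_powerset_neg_one_pow_card_smul_eq_zero {α M : Type*} [DecidableEq α] [AddCommGroup M]
    {s : Finset α} {a : α} (ha : a ∈ s) {f : Finset α → M} (hf : ∀ t, f (insert a t) = f t) :
    ∑ t ∈ s.powerset, (-1 : ℤ) ^ t.card • f t = 0 := by
  rw [← Finset.insert_erase ha, Finset.sum_powerset_insert (Finset.notMem_erase a s),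
    ← Finset.sum_add_distrib]
  refine Finset.sum_eq_zero fun t ht => ?_
  have hat : a ∉ t := fun h => Finset.notMem_erase a s (Finset.mem_powerset.1 ht h)
  rw [Finset.card_insert_of_notMem hat, hf, pow_succ, mul_neg_one, neg_smul, add_neg_cancel]

section CommonNbhd

variable {V : Type*}

/-- The set of common neighbors of a vertex set `X`, that is, the vertices whose open neighborhood
contains `X`. It is nonempty exactly when `X` is a face of the neighborhood complex. -/
def commonNbhd (G : SimpleGraph V) (X : Set V) : Set V :=
  {v | ∀ u ∈ X, G.Adj v u}

lemma mem_nbhdComplex_iff [Fintype V] {G : SimpleGraph V} {X : Finset V} :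
    X ∈ nbhdComplex G ↔ (commonNbhd G X).Nonempty := by
  simp [nbhdComplex, commonNbhd, Set.Nonempty]

lemma commonNbhd_mono {G H : SimpleGraph V} (hGH : G ≤ H) (X : Set V) :
    commonNbhd G X ⊆ commonNbhd H X :=
  fun _ hv u hu => hGH (hv u hu)

lemma disjoint_commonNbhd (G : SimpleGraph V) (X : Set V) : Disjoint (commonNbhd G X) X :=
  Set.disjoint_left.2 fun v hv hvX => G.irrefl (hv v hvX)

lemma between_commonNbhd_adj {G : SimpleGraph V} {X : Set V} {u v : V} :
    (G.between (commonNbhd G X) X).Adj u v ↔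
      (u ∈ commonNbhd G X ∧ v ∈ X) ∨ (u ∈ X ∧ v ∈ commonNbhd G X) := by
  rw [SimpleGraph.between_adj, and_iff_right_iff_imp]
  rintro (⟨hu, hv⟩ | ⟨hu, hv⟩)
  · exact hu v hv
  · exact (hv u hu).symm

lemma exists_completeBipartite_of_le_between_commonNbhd {G : SimpleGraph V} {X : Set V}
    (hE : G.edgeSet.Nonempty) (hG : G ≤ G.between (commonNbhd G X) X) :
    ∃ A B : Set V, A.Nonempty ∧ B.Nonempty ∧ Disjoint A B ∧
      ∀ u v : V, G.Adj u v ↔ (u ∈ A ∧ v ∈ B) ∨ (u ∈ B ∧ v ∈ A) := by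
  have hadj (u v : V) : G.Adj u v ↔
      (u ∈ commonNbhd G X ∧ v ∈ X) ∨ (u ∈ X ∧ v ∈ commonNbhd G X) :=
    ⟨fun h => between_commonNbhd_adj.1 (hG h), fun h => (between_commonNbhd_adj.2 h).1⟩
  obtain ⟨⟨u, v⟩, huv⟩ := hE
  have hne : (commonNbhd G X).Nonempty ∧ X.Nonempty := by
    rcases (hadj u v).1 huv with ⟨hu, hv⟩ | ⟨hu, hv⟩
    · exact ⟨⟨u, hu⟩, ⟨v, hv⟩⟩
    · exact ⟨⟨v, hv⟩, ⟨u, hu⟩⟩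
  exact ⟨commonNbhd G X, X, hne.1, hne.2, disjoint_commonNbhd G X, hadj⟩

lemma commonNbhd_deleteEdges_insert {G : SimpleGraph V} {X : Set V} {e : Sym2 V}
    (he : e ∉ (G.between (commonNbhd G X) X).edgeSet) (F : Set (Sym2 V)) :
    commonNbhd (G.deleteEdges (insert e F)) X = commonNbhd (G.deleteEdges F) X := by
  refine (commonNbhd_mono (SimpleGraph.deleteEdges_anti (Set.subset_insert e F)) X).antisymm
    fun v hv u hu => ?_
  have hvG : v ∈ commonNbhd G X := commonNbhd_mono (SimpleGraph.deleteEdges_le F) X hv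
  have hvu : s(v, u) ≠ e := by
    rintro rfl
    exact he (between_commonNbhd_adj.2 (Or.inl ⟨hvG, hu⟩))
  obtain ⟨hadj, hF⟩ := SimpleGraph.deleteEdges_adj.1 (hv u hu)
  exact SimpleGraph.deleteEdges_adj.2 ⟨hadj, fun h => h.elim hvu hF⟩

end CommonNbhd

lemma fromEdgeSet_edgeFinset_sdiff {V : Type*} [DecidableEq (Sym2 V)] (G : SimpleGraph V)
    [Fintype G.edgeSet] (F : Finset (Sym2 V)) :
    SimpleGraph.fromEdgeSet (↑(G.edgeFinset \ F) : Set (Sym2 V)) = G.deleteEdges F := by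
  rw [Finset.coe_sdiff, SimpleGraph.coe_edgeFinset, SimpleGraph.fromEdgeSet_sdiff,
    SimpleGraph.fromEdgeSet_edgeSet, SimpleGraph.deleteEdges]

theorem alternating_sum_nbhdPoly_eq_zero_general {V M : Type*} [Fintype V] [AddCommGroup M]
    (G : SimpleGraph V) [Fintype G.edgeSet] (hE : G.edgeSet ≠ ∅)
    (hnot : ¬ ∃ A B : Set V, A.Nonempty ∧ B.Nonempty ∧ Disjoint A B ∧
      ∀ u v : V, G.Adj u v ↔ (u ∈ A ∧ v ∈ B) ∨ (u ∈ B ∧ v ∈ A))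
    (w : Finset V → M) :
    ∑ F ∈ G.edgeFinset.powerset,
      (-1 : ℤ) ^ F.card • ∑ X ∈ nbhdComplex (G.deleteEdges F), w X = 0 := by
  classical
  have hface (F : Finset (Sym2 V)) : ∑ X ∈ nbhdComplex (G.deleteEdges F), w X =
      ∑ X : Finset V, if (commonNbhd (G.deleteEdges F) X).Nonempty then w X else 0 := by
    simp only [← mem_nbhdComplex_iff, Finset.sum_ite_mem, Finset.univ_inter]
  simp only [hface, Finset.smul_sum]
  rw [Finset.sum_comm]
  refine Finset.sum_eq_zero fun X _ => ?_
  obtain ⟨e, heG, heX⟩ : ∃ e ∈ G.edgeSet, e ∉ (G.between (commonNbhd G X) X).edgeSet :=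
    Set.not_subset.1 fun h => hnot <| exists_completeBipartite_of_le_between_commonNbhd
      (Set.nonempty_iff_ne_empty.2 hE) (SimpleGraph.edgeSet_subset_edgeSet.1 h)
  refine sum_powerset_neg_one_pow_card_smul_eq_zero (SimpleGraph.mem_edgeFinset.2 heG) fun F => ?_
  rw [Finset.coe_insert, commonNbhd_deleteEdges_insert heX]

open Classical in
theorem alternating_sum_nbhdPoly_eq_zero {V : Type*} [Fintype V] (G : SimpleGraph V)
    (hE : G.edgeSet ≠ ∅)
    (hnot : ¬ ∃ A B : Set V, A.Nonempty ∧ B.Nonempty ∧ Disjoint A B ∧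
      ∀ u v : V, G.Adj u v ↔ (u ∈ A ∧ v ∈ B) ∨ (u ∈ B ∧ v ∈ A))
    (x : ℤ) :
    ∑ F ∈ G.edgeFinset.powerset,
      (-1 : ℤ) ^ F.card *
        nbhdPoly (SimpleGraph.fromEdgeSet (↑(G.edgeFinset \ F) : Set (Sym2 V))) x = 0 := by
  simpa only [nbhdPoly, fromEdgeSet_edgeFinset_sdiff, smul_eq_mul] using
    alternating_sum_nbhdPoly_eq_zero_general G hE hnot fun X => x ^ X.card
end

section
/- Let k, r be positive integers and {E₁, …, E_r} a partition of a finite set E into exactly r blocks, each of size k. Let ℱ(k,r) = {A ⊆ E : ∃ j ∈ {1,…,r}, E_j ⊆ A}. Then Σ_{A ∈ ℱ(k,r)} (−1)^{|A|} = (−1)^{kr − r + 1}. -/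
/-!
By inclusion-exclusion, the sum over the sets containing a block is the sum over the nonempty
families `t` of blocks of `(-1) ^ (#t + 1)` times the alternating sum over the interval `[⋃ t, E]`.
That alternating sum cancels unless `⋃ t = E`. Disjoint nonempty blocks cover `E` irredundantly, so
the only surviving family is the full one, which contributes `(-1) ^ (r + 1) * (-1) ^ (k * r)`.
-/

open Finset

section

variable {α ι : Type*} [DecidableEq α]

lemma sum_Icc_neg_one_pow_card (S E : Finset α) :
    ∑ A ∈ Icc S E, (-1 : ℤ) ^ #A = if S = E then (-1) ^ #E else 0 := by
  obtain rfl | hne := eq_or_ne S E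
  · rw [Icc_self, sum_singleton, if_pos rfl]
  rw [if_neg hne]
  by_cases hSE : S ⊆ E
  · have hdisj {B : Finset α} (hB : B ∈ (E \ S).powerset) : Disjoint S B :=
      disjoint_sdiff.mono_right (mem_powerset.mp hB)
    have hinj : Set.InjOn (S ∪ ·) ((E \ S).powerset : Set (Finset α)) := fun B hB C hC h ↦ by
      rw [← union_sdiff_cancel_left (hdisj hB), ← union_sdiff_cancel_left (hdisj hC)]
      exact congrArg (· \ S) h
    have hsdiff : (E \ S).Nonempty := sdiff_nonempty.mpr fun h ↦ hne (hSE.antisymm h)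
    calc ∑ A ∈ Icc S E, (-1 : ℤ) ^ #A
        = ∑ B ∈ (E \ S).powerset, (-1 : ℤ) ^ #(S ∪ B) := by
          rw [Icc_eq_image_powerset hSE, sum_image hinj]
      _ = (-1) ^ #S * ∑ B ∈ (E \ S).powerset, (-1 : ℤ) ^ #B := by
          rw [mul_sum]
          exact sum_congr rfl fun B hB ↦ by rw [card_union_of_disjoint (hdisj hB), pow_add]
      _ = 0 := by rw [sum_powerset_neg_one_pow_card_of_nonempty hsdiff, mul_zero]
  · rw [Icc_eq_empty hSE, sum_empty]

lemma inf'_Icc_eq_Icc_biUnion {t : Finset ι} (ht : t.Nonempty) (P : ι → Finset α) (E : Finset α) :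
    t.inf' ht (fun j ↦ Icc (P j) E) = Icc (t.biUnion P) E := by
  ext A
  simp only [mem_inf', mem_Icc, biUnion_subset]
  exact ⟨fun h ↦ ⟨fun j hj ↦ (h j hj).1, (h _ ht.choose_spec).2⟩, fun h j hj ↦ ⟨h.1 j hj, h.2⟩⟩

lemma sum_neg_one_pow_card_eq_sum_covers (s : Finset ι) (P : ι → Finset α) (E : Finset α) :
    ∑ A ∈ E.powerset with ∃ j ∈ s, P j ⊆ A, (-1 : ℤ) ^ #A =
      ∑ t ∈ s.powerset with t.Nonempty ∧ t.biUnion P = E, (-1) ^ (#t + 1) * (-1) ^ #E := by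
  have hunion : {A ∈ E.powerset | ∃ j ∈ s, P j ⊆ A} = s.biUnion fun j ↦ Icc (P j) E := by
    ext A
    simp only [mem_filter, mem_powerset, mem_biUnion, mem_Icc]
    tauto
  calc ∑ A ∈ E.powerset with ∃ j ∈ s, P j ⊆ A, (-1 : ℤ) ^ #A
      = ∑ t : s.powerset.filter (·.Nonempty),
          (-1) ^ (#t.1 + 1) * ∑ A ∈ Icc (t.1.biUnion P) E, (-1 : ℤ) ^ #A := by
        simp only [hunion, inclusion_exclusion_sum_biUnion, inf'_Icc_eq_Icc_biUnion, smul_eq_mul]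
    _ = ∑ t ∈ s.powerset with t.Nonempty,
          if t.biUnion P = E then (-1) ^ (#t + 1) * (-1 : ℤ) ^ #E else 0 := by
        simp only [sum_Icc_neg_one_pow_card, mul_ite, mul_zero]
        exact sum_coe_sort _ fun t : Finset ι ↦
          if t.biUnion P = E then (-1) ^ (#t + 1) * (-1 : ℤ) ^ #E else 0
    _ = ∑ t ∈ s.powerset with t.Nonempty ∧ t.biUnion P = E, (-1) ^ (#t + 1) * (-1) ^ #E := by
        rw [← sum_filter, filter_filter]

lemma minimal_biUnion_eq_of_pairwiseDisjoint {s : Finset ι} {P : ι → Finset α}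
    (hdisj : (s : Set ι).PairwiseDisjoint P) (hne : ∀ j ∈ s, (P j).Nonempty) :
    Minimal (fun t : Finset ι ↦ t.biUnion P = s.biUnion P) s := by
  refine ⟨rfl, fun t ht hts j hj ↦ ?_⟩
  obtain ⟨x, hx⟩ := hne j hj
  obtain ⟨i, hi, hxi⟩ := mem_biUnion.mp (ht ▸ mem_biUnion.mpr ⟨j, hj, hx⟩ : x ∈ t.biUnion P)
  exact hdisj.elim_finset hj (hts hi) x hx hxi ▸ hi

theorem alternating_sum_sets_containing_a_block_general {s : Finset ι} (hs : s.Nonempty)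
    {P : ι → Finset α} {E : Finset α} (hmin : Minimal (fun t : Finset ι ↦ t.biUnion P = E) s) :
    ∑ A ∈ E.powerset with ∃ j ∈ s, P j ⊆ A, (-1 : ℤ) ^ #A = (-1) ^ (#E + #s + 1) := by
  have hcovers : {t ∈ s.powerset | t.Nonempty ∧ t.biUnion P = E} = {s} := by
    ext t
    simp only [mem_filter, mem_powerset, mem_singleton]
    constructor
    · rintro ⟨hts, -, ht⟩
      exact hmin.eq_of_le ht hts
    · rintro rfl
      exact ⟨Subset.rfl, hs, hmin.prop⟩
  rw [sum_neg_one_pow_card_eq_sum_covers, hcovers, sum_singleton]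
  ring

end

lemma neg_one_pow_sub_eq_neg_one_pow_add {R : Type*} [Monoid R] [HasDistribNeg R] {m n : ℕ}
    (h : n ≤ m) : (-1 : R) ^ (m - n) = (-1) ^ (m + n) :=
  neg_one_pow_congr (by rw [Nat.even_sub h, Nat.even_add])

open Classical in
theorem alternating_sum_sets_containing_a_block {α : Type*} [Fintype α] [DecidableEq α]
    (k r : ℕ) (hk : 0 < k) (hr : 0 < r) (E : Finset α) (P : Fin r → Finset α)
    (hdisj : ∀ i j : Fin r, i ≠ j → Disjoint (P i) (P j))
    (hcard : ∀ i : Fin r, (P i).card = k)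
    (hcover : Finset.univ.biUnion P = E) :
    ∑ A ∈ E.powerset.filter (fun A => ∃ j : Fin r, P j ⊆ A),
      (-1 : ℤ) ^ A.card = (-1 : ℤ) ^ (k * r - r + 1) := by
  subst hcover
  have hpair : ((univ : Finset (Fin r)) : Set (Fin r)).PairwiseDisjoint P :=
    fun i _ j _ ↦ hdisj i j
  have hne : ∀ j ∈ univ, (P j).Nonempty := fun j _ ↦ card_pos.mp (hk.trans_eq (hcard j).symm)
  have hE : #(univ.biUnion P) = k * r := by simp [card_biUnion hpair, hcard, mul_comm]
  have hsum := alternating_sum_sets_containing_a_block_general ⟨⟨0, hr⟩, mem_univ _⟩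
    (minimal_biUnion_eq_of_pairwiseDisjoint hpair hne)
  rw [pow_succ, neg_one_pow_sub_eq_neg_one_pow_add (Nat.le_mul_of_pos_left r hk), ← pow_succ]
  simpa only [mem_univ, true_and, hE, card_fin] using hsum
end

section
/- Let G = (V, E) = K_{p,q} be a complete bipartite graph with p + q vertices (p, q ≥ 1). Then Σ_{F ⊆ E} (−1)^{|F|} N(G − F, x) = (−1)^{q−1} x^p + (−1)^{p−1} x^q, where G − F denotes the spanning subgraph (V, E \ F). -/
/-!
A set `X` lies in `𝒩(H)` iff the vertices adjacent to all of `X` form a nonempty set, so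
inclusion-exclusion over the sets `T` of such vertices gives
`N(H, x) = ∑ (-1)^(|T|+1) x^|X|`, the sum running over the pairs `T ≠ ∅`, `X` that are completely
joined in `H`. For `H = G - F` this says that the `T`-`X` edges all lie in `E \ F`, and the
alternating sum over such `F ⊆ E` vanishes unless the `T`-`X` edges are all of `E`. Thus only pairs
`(T, X)` whose cross edges are exactly `E` contribute, and for `K_{p,q}` these are the two orderings
of the colour classes.
-/

open Finset SimpleGraph

/-- The edges of the complete join of two vertex sets: all unordered pairs with one entry in `T`
and the other in `X`, whether or not they are edges of the graph at hand. Equality of this set with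
the edge set says both that `T` and `X` are completely joined and that there are no other edges. -/
def crossEdges {V : Type*} [DecidableEq V] (T X : Finset V) : Finset (Sym2 V) :=
  image₂ (fun v u => s(v, u)) T X

section CrossEdges

variable {V : Type*} [DecidableEq V]

lemma mk_mem_crossEdges {T X : Finset V} {v u : V} :
    s(v, u) ∈ crossEdges T X ↔ v ∈ T ∧ u ∈ X ∨ u ∈ T ∧ v ∈ X := by
  simp only [crossEdges, mem_image₂, Sym2.eq_iff]
  grind

lemma crossEdges_comm (T X : Finset V) : crossEdges T X = crossEdges X T :=
  image₂_comm fun _ _ => Sym2.eq_swap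

lemma isCompleteBetween_iff_crossEdges_subset {G : SimpleGraph V} {T X : Finset V} :
    G.IsCompleteBetween T X ↔ (crossEdges T X : Set (Sym2 V)) ⊆ G.edgeSet := by
  simp only [crossEdges, coe_image₂, Set.image2_subset_iff, mem_edgeSet, IsCompleteBetween]

lemma isCompleteBetween_fromEdgeSet_sdiff_iff {G : SimpleGraph V} [Fintype G.edgeSet]
    {F : Finset (Sym2 V)} {T X : Finset V} :
    (fromEdgeSet (↑(G.edgeFinset \ F) : Set (Sym2 V))).IsCompleteBetween T X ↔
      crossEdges T X ⊆ G.edgeFinset \ F := by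
  have edgeSet_eq : (fromEdgeSet (↑(G.edgeFinset \ F) : Set (Sym2 V))).edgeSet =
      ↑(G.edgeFinset \ F) := by
    rw [edgeSet_fromEdgeSet, sdiff_eq_left, Set.disjoint_left]
    intro e he
    exact G.not_isDiag_of_mem_edgeSet (mem_edgeFinset.1 (mem_sdiff.1 he).1)
  rw [isCompleteBetween_iff_crossEdges_subset, edgeSet_eq, coe_subset]

end CrossEdges

lemma sum_powerset_filter_subset_sdiff_neg_one_pow_card {ε : Type*} [DecidableEq ε]
    (E S : Finset ε) :
    ∑ F ∈ E.powerset with S ⊆ E \ F, (-1 : ℤ) ^ #F = if S = E then 1 else 0 := by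
  by_cases hSE : S ⊆ E
  · have filter_eq : {F ∈ E.powerset | S ⊆ E \ F} = (E \ S).powerset := by
      ext F
      simp [subset_sdiff, hSE, disjoint_comm]
    rw [filter_eq, sum_powerset_neg_one_pow_card]
    exact if_congr (sdiff_eq_empty_iff_subset.trans ⟨hSE.antisymm, fun h => h.superset⟩) rfl rfl
  · have filter_eq : {F ∈ E.powerset | S ⊆ E \ F} = ∅ :=
      filter_false_of_mem fun F _ hS => hSE (hS.trans sdiff_subset)
    rw [filter_eq, sum_empty, if_neg fun h => hSE h.subset]

section NbhdPoly

variable {V : Type*} [Fintype V]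

open Classical in
lemma nbhdPoly_eq_sum_isCompleteBetween (G : SimpleGraph V) (x : ℤ) :
    nbhdPoly G x = ∑ P : Finset V × Finset V with P.1.Nonempty ∧ G.IsCompleteBetween P.1 P.2,
      (-1) ^ (#P.1 + 1) * x ^ #P.2 := by
  have nbhdPoly_eq_sum_indicator : nbhdPoly G x =
      ∑ X, (⋃ v ∈ (univ : Finset V), {X : Finset V | ∀ u ∈ X, G.Adj v u}).indicator
        (fun X => x ^ #X) X := by
    simp [nbhdPoly, nbhdComplex, sum_filter, Set.indicator_apply]
  rw [nbhdPoly_eq_sum_indicator, sum_filter, Fintype.sum_prod_type_right]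
  refine sum_congr rfl fun X _ => ?_
  rw [indicator_biUnion_eq_sum_powerset, powerset_univ, sum_filter]
  refine sum_congr rfl fun T _ => ?_
  simp [Set.indicator_apply, IsCompleteBetween, ite_and]

lemma sum_neg_one_pow_card_mul_nbhdPoly [DecidableEq V] (G : SimpleGraph V) [Fintype G.edgeSet]
    (x : ℤ) :
    ∑ F ∈ G.edgeFinset.powerset,
      (-1) ^ #F * nbhdPoly (fromEdgeSet (↑(G.edgeFinset \ F) : Set (Sym2 V))) x =
    ∑ P : Finset V × Finset V with P.1.Nonempty ∧ crossEdges P.1 P.2 = G.edgeFinset,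
      (-1) ^ (#P.1 + 1) * x ^ #P.2 := by
  simp only [nbhdPoly_eq_sum_isCompleteBetween, isCompleteBetween_fromEdgeSet_sdiff_iff, mul_sum]
  calc
    _ = ∑ P : Finset V × Finset V with P.1.Nonempty,
          ∑ F ∈ G.edgeFinset.powerset with crossEdges P.1 P.2 ⊆ G.edgeFinset \ F,
            (-1) ^ #F * ((-1) ^ (#P.1 + 1) * x ^ #P.2) :=
      sum_comm' fun F P => by simp only [mem_filter, mem_univ, true_and]; tauto
    _ = _ := by
      simp only [← sum_mul, sum_powerset_filter_subset_sdiff_neg_one_pow_card, ite_mul, one_mul,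
        zero_mul, ← sum_filter, filter_filter]

end NbhdPoly

section CompleteBipartite

variable {α β : Type*} [Fintype α] [Fintype β] [DecidableEq α] [DecidableEq β]
  [Fintype (completeBipartiteGraph α β).edgeSet]

lemma crossEdges_map_inl_map_inr :
    crossEdges (univ.map .inl) (univ.map .inr) = (completeBipartiteGraph α β).edgeFinset := by
  ext e
  induction e with | _ v u =>
  cases v <;> cases u <;> simp [mk_mem_crossEdges]

lemma eq_map_inl_and_eq_map_inr_of_crossEdges_eq {T X : Finset (α ⊕ β)}
    (h : crossEdges T X = (completeBipartiteGraph α β).edgeFinset) {a : α} {b : β}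
    (ha : .inl a ∈ T) (hb : .inr b ∈ X) : T = univ.map .inl ∧ X = univ.map .inr := by
  have adj_iff (v u : α ⊕ β) :
      v ∈ T ∧ u ∈ X ∨ u ∈ T ∧ v ∈ X ↔ (completeBipartiteGraph α β).Adj v u := by
    rw [← mk_mem_crossEdges, h, mem_edgeFinset, mem_edgeSet]
  have inl_notMem (a' : α) : .inl a' ∉ X := fun ha' => by
    simpa using (adj_iff (.inl a) (.inl a')).1 (.inl ⟨ha, ha'⟩)
  have inr_notMem (b' : β) : .inr b' ∉ T := fun hb' => by
    simpa using (adj_iff (.inr b') (.inr b)).1 (.inl ⟨hb', hb⟩)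
  have inl_mem_and_inr_mem (a' : α) (b' : β) : .inl a' ∈ T ∧ .inr b' ∈ X := by
    simpa [inl_notMem, inr_notMem] using adj_iff (.inl a') (.inr b')
  constructor <;> ext (a' | b')
  · simp [(inl_mem_and_inr_mem a' b).1]
  · simp [inr_notMem]
  · simp [inl_notMem]
  · simp [(inl_mem_and_inr_mem a b').2]

lemma crossEdges_eq_edgeFinset_completeBipartiteGraph_iff [Nonempty α] [Nonempty β]
    {T X : Finset (α ⊕ β)} :
    crossEdges T X = (completeBipartiteGraph α β).edgeFinset ↔
      T = univ.map .inl ∧ X = univ.map .inr ∨ T = univ.map .inr ∧ X = univ.map .inl := by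
  constructor
  · intro h
    obtain ⟨a⟩ := ‹Nonempty α›
    obtain ⟨b⟩ := ‹Nonempty β›
    have mem_crossEdges : s(.inl a, .inr b) ∈ crossEdges T X := by simp [h]
    rcases mk_mem_crossEdges.1 mem_crossEdges with ⟨ha, hb⟩ | ⟨hb, ha⟩
    · exact .inl (eq_map_inl_and_eq_map_inr_of_crossEdges_eq h ha hb)
    · rw [crossEdges_comm] at h
      exact .inr (eq_map_inl_and_eq_map_inr_of_crossEdges_eq h ha hb).symm
  · rintro (⟨rfl, rfl⟩ | ⟨rfl, rfl⟩)
    · exact crossEdges_map_inl_map_inr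
    · rw [crossEdges_comm, crossEdges_map_inl_map_inr]

theorem alternating_sum_nbhdPoly_completeBipartite_general [Nonempty α] [Nonempty β] (x : ℤ) :
    ∑ F ∈ (completeBipartiteGraph α β).edgeFinset.powerset,
      (-1 : ℤ) ^ #F * nbhdPoly (fromEdgeSet
        (↑((completeBipartiteGraph α β).edgeFinset \ F) : Set (Sym2 (α ⊕ β)))) x =
      (-1) ^ (Fintype.card β - 1) * x ^ Fintype.card α +
        (-1) ^ (Fintype.card α - 1) * x ^ Fintype.card β := by
  set L : Finset (α ⊕ β) := univ.map .inl with hL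
  set R : Finset (α ⊕ β) := univ.map .inr with hR
  have filter_eq_pair : ({P | P.1.Nonempty ∧
      crossEdges P.1 P.2 = (completeBipartiteGraph α β).edgeFinset} : Finset (_ × _)) =
      {(R, L), (L, R)} := by
    ext ⟨T, X⟩
    simp only [mem_filter, mem_univ, true_and, mem_insert, mem_singleton, Prod.mk.injEq,
      crossEdges_eq_edgeFinset_completeBipartiteGraph_iff, ← hL, ← hR]
    constructor
    · exact fun h => h.2.symm
    · rintro (⟨rfl, rfl⟩ | ⟨rfl, rfl⟩) <;> simp [hL, hR]
  have pair_ne : (R, L) ≠ (L, R) := by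
    have L_ne_R : L ≠ R := (disjoint_map_inl_map_inr _ _).ne univ_nonempty.map.ne_empty
    simp [L_ne_R.symm]
  have neg_one_pow_add_one {n : ℕ} (hn : n ≠ 0) : (-1 : ℤ) ^ (n + 1) = (-1) ^ (n - 1) := by
    obtain ⟨m, rfl⟩ := Nat.exists_eq_succ_of_ne_zero hn
    simp [pow_succ]
  rw [sum_neg_one_pow_card_mul_nbhdPoly, filter_eq_pair, sum_pair pair_ne]
  simp [hL, hR, neg_one_pow_add_one]

end CompleteBipartite

open Classical in
theorem alternating_sum_nbhdPoly_completeBipartite (p q : ℕ) (hp : 1 ≤ p) (hq : 1 ≤ q)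
    (x : ℤ) :
    ∑ F ∈ (completeBipartiteGraph (Fin p) (Fin q)).edgeFinset.powerset,
      (-1 : ℤ) ^ F.card *
        nbhdPoly (SimpleGraph.fromEdgeSet
          (↑((completeBipartiteGraph (Fin p) (Fin q)).edgeFinset \ F) :
            Set (Sym2 (Fin p ⊕ Fin q)))) x =
      (-1 : ℤ) ^ (q - 1) * x ^ p + (-1 : ℤ) ^ (p - 1) * x ^ q := by
  have : Nonempty (Fin p) := Fin.pos_iff_nonempty.1 hp
  have : Nonempty (Fin q) := Fin.pos_iff_nonempty.1 hq
  simpa using alternating_sum_nbhdPoly_completeBipartite_general (α := Fin p) (β := Fin q) x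
end

section
/- Let G = (V, E) be a finite simple graph of order n and let 𝐺̄ denote its complement. Then D(G, x) + N(𝐺̄, x) = (1 + x)^n. -/
/- `W` is a dominating set of `G`: every vertex is in `W` or adjacent to a vertex of `W`. -/
def IsDominatingSet {V : Type*} (G : SimpleGraph V) (W : Finset V) : Prop :=
  ∀ v : V, v ∈ W ∨ ∃ w ∈ W, G.Adj w v

/- The family of all dominating sets of `G`. -/
open Classical in
noncomputable def domFamily {V : Type*} [Fintype V] (G : SimpleGraph V) :
    Finset (Finset V) :=
  Finset.univ.filter fun W => IsDominatingSet G W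

/- The domination polynomial of `G`, evaluated at `x`. -/
noncomputable def domPoly {V : Type*} [Fintype V] (G : SimpleGraph V) (x : ℤ) : ℤ :=
  ∑ W ∈ domFamily G, x ^ W.card

/- A set fails to dominate `G` exactly when some vertex `v` lies outside its closed neighborhood,
that is, when it is contained in the open neighborhood of `v` in `Gᶜ`. Hence the neighborhood
complex of `Gᶜ` is the complement, in the power set of `V`, of the family of dominating sets. -/

section Domination

variable {V : Type*} (G : SimpleGraph V)

theorem forall_mem_compl_adj_iff (v : V) (X : Finset V) :
    (∀ u ∈ X, Gᶜ.Adj v u) ↔ v ∉ X ∧ ∀ u ∈ X, ¬G.Adj u v := by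
  simp only [SimpleGraph.compl_adj, forall₂_and, Finset.forall_mem_not_eq, G.adj_comm v]

theorem not_isDominatingSet_iff_exists_compl_adj (W : Finset V) :
    ¬IsDominatingSet G W ↔ ∃ v, ∀ u ∈ W, Gᶜ.Adj v u := by
  simp only [IsDominatingSet, forall_mem_compl_adj_iff, not_forall, not_or, not_exists, not_and]

theorem nbhdComplex_compl [Fintype V] [DecidableEq V] : nbhdComplex Gᶜ = (domFamily G)ᶜ := by
  ext W
  simp only [nbhdComplex, domFamily, Finset.mem_compl, Finset.mem_filter_univ,
    not_isDominatingSet_iff_exists_compl_adj]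

end Domination

theorem sum_pow_card_eq_one_add_pow (V : Type*) [Fintype V] {R : Type*} [Semiring R]
    (x : R) :
    ∑ W : Finset V, x ^ W.card = (1 + x) ^ Fintype.card V := by
  rw [add_comm, (Commute.one_right x).add_pow, ← Finset.powerset_univ,
    Finset.sum_powerset_apply_card (x ^ ·), Finset.card_univ]
  simp only [one_pow, mul_one, nsmul_eq_mul, Nat.cast_comm]

theorem domPoly_add_nbhdPoly_compl_general {V : Type*} [Fintype V] (G : SimpleGraph V)
    {R : Type*} [Semiring R] (x : R) :
    ∑ W ∈ domFamily G, x ^ W.card + ∑ X ∈ nbhdComplex Gᶜ, x ^ X.card =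
      (1 + x) ^ Fintype.card V := by
  classical
  rw [nbhdComplex_compl, Finset.sum_add_sum_compl, sum_pow_card_eq_one_add_pow]

theorem domPoly_add_nbhdPoly_compl {V : Type*} [Fintype V] (G : SimpleGraph V) (x : ℤ) :
    domPoly G x + nbhdPoly Gᶜ x = (1 + x) ^ Fintype.card V :=
  domPoly_add_nbhdPoly_compl_general G x
end

section
/- The number of dominating sets of any finite simple graph is odd. -/
/- The number of dominating sets of `G`. -/
open Classical in
noncomputable def numDomSets {V : Type*} [Fintype V] (G : SimpleGraph V) : ℕ :=
  (Finset.univ.filter fun W : Finset V => IsDominatingSet G W).card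

/-!
Count modulo 2 the pairs `(A, B)` of vertex sets such that no vertex of `B` lies in the closed
neighborhood `N[A]`. For fixed `A` there are `2 ^ |V \ N[A]|` choices of `B`, an odd number exactly
when `A` is dominating, so the number of pairs has the parity of the number of dominating sets.
On the other hand, swapping `A` and `B` is an involution on these pairs whose only fixed point
is `(∅, ∅)`, so the number of pairs is odd.

The same count works for any symmetric relation in place of closed adjacency; the fixed points of
the swap are then the sets with no two (possibly equal) related elements.
-/

open Finset

section Parity

variable {ι κ : Type*}

lemma odd_card_iff_odd_card_filter_fixed [DecidableEq ι] {s : Finset ι} {f : ι → ι}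
    (hmem : ∀ x ∈ s, f x ∈ s) (hinv : ∀ x ∈ s, f (f x) = x) :
    Odd #s ↔ Odd #{x ∈ s | f x = x} := by
  have moved_even : Even #{x ∈ s | f x ≠ x} := by
    rw [← ZMod.natCast_eq_zero_iff_even, card_eq_sum_ones, Nat.cast_sum]
    refine sum_involution (fun x _ => f x) (fun _ _ => CharTwo.add_self_eq_zero _)
      (fun x hx _ => (mem_filter.1 hx).2) (fun x hx => ?_)
      (fun x hx => hinv x (mem_filter.1 hx).1)
    obtain ⟨hxs, hne⟩ := mem_filter.1 hx
    exact mem_filter.2 ⟨hmem x hxs, by rw [hinv x hxs]; exact hne.symm⟩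
  rw [← card_filter_add_card_filter_not (s := s) (fun x => f x = x), Nat.odd_add]
  exact iff_true_right moved_even

lemma odd_card_filter_prod_iff [Fintype ι] [Fintype κ] (R : ι → κ → Prop)
    [∀ i, DecidablePred (R i)] :
    Odd #{p : ι × κ | R p.1 p.2} ↔ Odd #{i | Odd #{k | R i k}} := by
  have card_eq_sum : #{p : ι × κ | R p.1 p.2} = ∑ i, #{k | R i k} := by
    simp only [card_filter, Fintype.sum_prod_type]
  rw [card_eq_sum, odd_sum_iff_odd_card_odd]

lemma odd_card_filter_symm_iff [Fintype ι] (R : ι → ι → Prop) [DecidableRel R] [Std.Symm R] :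
    Odd #{p : ι × ι | R p.1 p.2} ↔ Odd #{i | R i i} := by
  classical
  have fixed_eq_image : {p ∈ ({p | R p.1 p.2} : Finset (ι × ι)) | p.swap = p} =
      ({i | R i i} : Finset ι).image fun i => (i, i) := by
    grind
  rw [odd_card_iff_odd_card_filter_fixed (f := Prod.swap) _ (fun p _ => p.swap_swap),
    fixed_eq_image, card_image_of_injective _ fun i j h => congrArg Prod.fst h]
  simp only [mem_filter, mem_univ, true_and, Prod.fst_swap, Prod.snd_swap]
  exact fun p hp => symm_of R hp

lemma odd_card_filter_odd_card_symm_iff [Fintype ι] (R : ι → ι → Prop) [DecidableRel R]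
    [Std.Symm R] : Odd #{i | Odd #{j | R i j}} ↔ Odd #{i | R i i} := by
  rw [← odd_card_filter_prod_iff, odd_card_filter_symm_iff]

end Parity

section Relation

variable {α β : Type*}

/-- A set of elements of `α` dominates if every element of `β` is related to one of them. For the
closed adjacency relation of a graph this is domination, and for adjacency itself it is total
domination. -/
def Dominates (r : α → β → Prop) (A : Finset α) : Prop :=
  ∀ b, ∃ a ∈ A, r a b

/-- No element of `A` is related to an element of `B`. For the closed adjacency relation of a graph
this says that `B` avoids the closed neighborhood of `A`. -/
def Unrelated (r : α → β → Prop) (A : Finset α) (B : Finset β) : Prop :=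
  ∀ b ∈ B, ∀ a ∈ A, ¬ r a b

instance Unrelated.instSymm (r : α → α → Prop) [Std.Symm r] : Std.Symm (Unrelated r) where
  symm _ _ h a ha b hb hba := h b hb a ha (symm_of r hba)

lemma unrelated_self_iff_eq_empty (r : α → α → Prop) [Std.Refl r] {A : Finset α} :
    Unrelated r A A ↔ A = ∅ := by
  refine ⟨fun h => eq_empty_of_forall_notMem fun a ha => h a ha a ha (refl_of r a), ?_⟩
  rintro rfl
  simp [Unrelated]

open Classical in
lemma filter_unrelated_eq_powerset [Fintype β] (r : α → β → Prop) (A : Finset α) :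
    ({B | Unrelated r A B} : Finset (Finset β)) =
      powerset {b | ∀ a ∈ A, ¬ r a b} := by
  ext B
  rw [mem_filter_univ, mem_powerset, subset_iff]
  simp only [mem_filter_univ, Unrelated]

open Classical in
lemma odd_card_unrelated_iff_dominates [Fintype β] (r : α → β → Prop) (A : Finset α) :
    Odd #{B | Unrelated r A B} ↔ Dominates r A := by
  have odd_two_pow_iff (n : ℕ) : Odd (2 ^ n) ↔ n = 0 := by
    simp [← Nat.not_even_iff_odd, Nat.even_pow]
  rw [filter_unrelated_eq_powerset, card_powerset, odd_two_pow_iff, card_eq_zero,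
    filter_eq_empty_iff]
  simp [Dominates]

open Classical in
theorem odd_card_dominates_iff_odd_card_unrelated_self [Fintype α] (r : α → α → Prop)
    [Std.Symm r] :
    Odd #{A | Dominates r A} ↔ Odd #{A | Unrelated r A A} := by
  simp only [← odd_card_unrelated_iff_dominates]
  exact odd_card_filter_odd_card_symm_iff (Unrelated r)

open Classical in
theorem odd_card_dominates [Fintype α] (r : α → α → Prop) [Std.Refl r] [Std.Symm r] :
    Odd #{A | Dominates r A} := by
  have unrelated_self_eq : ({A | Unrelated r A A} : Finset (Finset α)) = {∅} := by
    ext A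
    rw [mem_filter_univ, mem_singleton, unrelated_self_iff_eq_empty]
  rw [odd_card_dominates_iff_odd_card_unrelated_self, unrelated_self_eq, card_singleton]
  exact odd_one

end Relation

section Graph

variable {V : Type*} (G : SimpleGraph V)

/-- Closed adjacency, the relation `v ∈ N[w]`. -/
def ClosedAdj (w v : V) : Prop :=
  w = v ∨ G.Adj w v

instance ClosedAdj.instRefl : Std.Refl (ClosedAdj G) where
  refl _ := .inl rfl

instance ClosedAdj.instSymm : Std.Symm (ClosedAdj G) where
  symm _ _ h := h.imp Eq.symm G.adj_symm

lemma isDominatingSet_iff_dominates_closedAdj {W : Finset V} :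
    IsDominatingSet G W ↔ Dominates (ClosedAdj G) W := by
  simp only [IsDominatingSet, Dominates, ClosedAdj, and_or_left, exists_or, exists_eq_right]

open Classical in
lemma numDomSets_eq_card_dominates_closedAdj [Fintype V] :
    numDomSets G = #{W | Dominates (ClosedAdj G) W} :=
  congrArg card (filter_congr fun _ _ => isDominatingSet_iff_dominates_closedAdj G)

end Graph

/-- The number of dominating sets of any finite simple graph is odd. -/
theorem odd_numDomSets {V : Type*} [Fintype V] (G : SimpleGraph V) :
    Odd (numDomSets G) := by
  rw [numDomSets_eq_card_dominates_closedAdj]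
  exact odd_card_dominates (ClosedAdj G)
end

section
/- Let G = (V, E) be a finite simple graph, let W ∈ 𝒩(G) be a member of the neighborhood complex of G, and define ℰ(W) = {F ⊆ E : W ∈ 𝒩((V,F))}. If there exists an edge e ∈ E not in the edge boundary ∂W of W, then Σ_{F ∈ ℰ(W)} (−1)^{|E| − |F|} = 0. -/
/-!
Since graphs have no loops, a vertex `v` with `W ⊆ N(v)` lies outside `W`, so the inclusion only
involves edges of the boundary of `W`, that is, of `G.between W Wᶜ`. Hence adding the non-boundary
edge `e` to `F` or removing it does not affect membership in the family, but it flips the sign of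
the term of `F`, so the terms cancel in pairs.
-/

theorem sum_powerset_filter_neg_one_pow_card_sub_card_eq_zero {α R : Type*} [DecidableEq α]
    [Ring R] {s : Finset α} {a : α} (ha : a ∈ s) {p : Finset α → Prop} [DecidablePred p]
    (hp : ∀ t ⊆ s, p (insert a t) ↔ p t) :
    ∑ t ∈ s.powerset with p t, (-1 : R) ^ (s.card - t.card) = 0 := by
  obtain ⟨s, has, rfl⟩ : ∃ s', a ∉ s' ∧ insert a s' = s :=
    ⟨s.erase a, s.notMem_erase a, Finset.insert_erase ha⟩
  rw [Finset.sum_filter, Finset.sum_powerset_insert has, ← Finset.sum_add_distrib]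
  refine Finset.sum_eq_zero fun t ht => ?_
  have hts : t ⊆ s := Finset.mem_powerset.mp ht
  have hat : a ∉ t := fun h => has (hts h)
  have hpt : p (insert a t) ↔ p t := hp t (hts.trans (s.subset_insert a))
  have hexp : s.card + 1 - t.card = s.card - t.card + 1 :=
    Nat.sub_add_comm (Finset.card_le_card hts)
  simp only [hpt, Finset.card_insert_of_notMem has, Finset.card_insert_of_notMem hat,
    Nat.add_sub_add_right, hexp, pow_succ]
  split_ifs <;> simp

section Boundary

variable {V : Type*} {G : SimpleGraph V}

theorem subset_neighborSet_between_compl_iff {W : Set V} {v : V} :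
    W ⊆ (G.between W Wᶜ).neighborSet v ↔ W ⊆ G.neighborSet v := by
  refine ⟨fun h u hu => (h hu).1, fun h u hu => ?_⟩
  have hv : v ∉ W := fun hv => G.irrefl (h hv)
  exact ⟨h hu, Or.inr ⟨hv, hu⟩⟩

theorem between_fromEdgeSet_insert {e : Sym2 V} {s t : Set V} (he : e ∈ G.edgeSet)
    (hst : e ∉ (G.between s t).edgeSet) (F : Set (Sym2 V)) :
    (SimpleGraph.fromEdgeSet (insert e F)).between s t =
      (SimpleGraph.fromEdgeSet F).between s t := by
  ext u v
  simp only [SimpleGraph.between_adj, SimpleGraph.fromEdgeSet_adj, Set.mem_insert_iff]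
  refine and_congr_left fun huv => and_congr_left fun _ => or_iff_right ?_
  rintro rfl
  exact hst ⟨he, huv⟩

theorem subset_neighborSet_fromEdgeSet_insert_iff {e : Sym2 V} {W : Set V} (he : e ∈ G.edgeSet)
    (hbd : e ∉ (G.between W Wᶜ).edgeSet) {F : Set (Sym2 V)} {v : V} :
    W ⊆ (SimpleGraph.fromEdgeSet (insert e F)).neighborSet v ↔
      W ⊆ (SimpleGraph.fromEdgeSet F).neighborSet v := by
  rw [← subset_neighborSet_between_compl_iff, between_fromEdgeSet_insert he hbd,
    subset_neighborSet_between_compl_iff]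

theorem exists_eq_mk_of_mem_edgeSet_between_compl {W : Set V} {e : Sym2 V}
    (he : e ∈ (G.between W Wᶜ).edgeSet) :
    ∃ u v, e = s(u, v) ∧ u ∈ W ∧ v ∉ W := by
  induction e with | h u v =>
  obtain ⟨-, ⟨hu, hv⟩ | ⟨hu, hv⟩⟩ := he
  · exact ⟨u, v, rfl, hu, hv⟩
  · exact ⟨v, u, Sym2.eq_swap, hv, hu⟩

theorem mem_nbhdComplex_iff_exists_subset_neighborSet [Fintype V] {W : Finset V} :
    W ∈ nbhdComplex G ↔ ∃ v, (W : Set V) ⊆ G.neighborSet v := by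
  simp [nbhdComplex, Set.subset_def]

open Classical in
theorem alternating_sum_over_edge_families_eq_zero_general {R : Type*} [Ring R]
    [Fintype G.edgeSet] {W : Set V} {e : Sym2 V} (he : e ∈ G.edgeFinset)
    (hbd : e ∉ (G.between W Wᶜ).edgeSet) :
    ∑ F ∈ G.edgeFinset.powerset.filter (fun F : Finset (Sym2 V) =>
        ∃ v, W ⊆ (SimpleGraph.fromEdgeSet (↑F : Set (Sym2 V))).neighborSet v),
      (-1 : R) ^ (G.edgeFinset.card - F.card) = 0 := by
  refine sum_powerset_filter_neg_one_pow_card_sub_card_eq_zero he fun F _ => ?_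
  simp only [Finset.coe_insert]
  exact exists_congr fun v =>
    subset_neighborSet_fromEdgeSet_insert_iff (SimpleGraph.mem_edgeFinset.mp he) hbd

end Boundary

open Classical in
theorem alternating_sum_over_edge_families_eq_zero {V : Type*} [Fintype V]
    (G : SimpleGraph V) (W : Finset V) (hW : W ∈ nbhdComplex G)
    (e : Sym2 V) (he : e ∈ G.edgeFinset)
    (hbd : ¬ ∃ u v : V, e = s(u, v) ∧ u ∈ W ∧ v ∉ W) :
    ∑ F ∈ G.edgeFinset.powerset.filter (fun F : Finset (Sym2 V) =>
        W ∈ nbhdComplex (SimpleGraph.fromEdgeSet (↑F : Set (Sym2 V)))),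
      (-1 : ℤ) ^ (G.edgeFinset.card - F.card) = 0 := by
  convert alternating_sum_over_edge_families_eq_zero_general (R := ℤ) he
    (mt exists_eq_mk_of_mem_edgeSet_between_compl hbd)
  exact mem_nbhdComplex_iff_exists_subset_neighborSet
end

section
/- For a finite simple graph G = (V, E) of order n, the number of non-dominating vertex subsets of G equals the number of sets in the neighborhood complex of the complement 𝐺̄; equivalently, 2^n − d(G) = N(𝐺̄, 1). -/
/-- The witness `v` is a vertex outside the closed neighborhood `N[W]`. -/
theorem not_isDominatingSet_iff {V : Type*} {G : SimpleGraph V} {W : Finset V} :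
    ¬ IsDominatingSet G W ↔ ∃ v : V, ∀ w ∈ W, Gᶜ.Adj v w := by
  have undominated_iff (v : V) :
      ¬ (v ∈ W ∨ ∃ w ∈ W, G.Adj w v) ↔ ∀ w ∈ W, Gᶜ.Adj v w := by
    simp only [not_or, not_exists, not_and, SimpleGraph.compl_adj, G.adj_comm v, ne_eq,
      forall₂_and, Finset.forall_mem_not_eq]
  simp only [IsDominatingSet, not_forall, undominated_iff]

section Finite

variable {V : Type*} [Fintype V] (G : SimpleGraph V)

open Classical in
theorem filter_not_isDominatingSet_eq_nbhdComplex_compl :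
    (Finset.univ.filter fun W : Finset V => ¬ IsDominatingSet G W) = nbhdComplex Gᶜ := by
  ext W
  simp only [nbhdComplex, Finset.mem_filter_univ, not_isDominatingSet_iff]

theorem numDomSets_add_card_nbhdComplex_compl :
    numDomSets G + (nbhdComplex Gᶜ).card = 2 ^ Fintype.card V := by
  classical
  rw [← filter_not_isDominatingSet_eq_nbhdComplex_compl, numDomSets,
    Finset.card_filter_add_card_filter_not, Finset.card_univ, Fintype.card_finset]

end Finite

open Classical in
theorem card_non_dominating_eq_card_nbhdComplex_compl {V : Type*} [Fintype V]
    (G : SimpleGraph V) :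
    (Finset.univ.filter fun W : Finset V => ¬ IsDominatingSet G W).card =
        (nbhdComplex Gᶜ).card ∧
      (2 : ℤ) ^ Fintype.card V - (numDomSets G : ℤ) = ((nbhdComplex Gᶜ).card : ℤ) := by
  refine ⟨congrArg Finset.card (filter_not_isDominatingSet_eq_nbhdComplex_compl G), ?_⟩
  rw [sub_eq_iff_eq_add']
  exact_mod_cast (numDomSets_add_card_nbhdComplex_compl G).symm
end
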